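/- Let d ∈ ℕ and, for each i ∈ {1,…,d}, let (φ^{(i)}_j)_{j ∈ ℕ₀} be a family of nonnegative functions on ℝ with Σ_{j ∈ ℕ₀} φ^{(i)}_j(k) = 1 for every k ∈ ℕ₀, and set φ_{j̄}(k̄) := φ^{(1)}_{j₁}(k₁)⋯φ^{(d)}_{j_d}(k_d) for j̄, k̄ ∈ ℕ₀^d. Then for every f ∈ L¹([0,1]^d) and every Schwartz function η ∈ 𝒮(ℝ^d) the double series Σ_{j̄ ∈ ℕ₀^d} Σ_{k̄ ∈ ℕ₀^d} φ_{j̄}(k̄) (∫_{[0,1]^d} f c_{k̄})(∫_{[0,1]^d} c_{k̄} η) converges absolutely and equals ∫_{[0,1]^d} f(x) η(x) dx; that is, f = Σ_{j̄ ∈ ℕ₀^d} f^{hpc}_{j̄} weak*-ly in 𝒮′(ℝ^d), where f^{hpc}_{j̄} := Σ_{k̄ ∈ ℕ₀^d} φ_{j̄}(k̄) (∫_{[0,1]^d} f c_{k̄}) c_{k̄} are the half-period cosine building blocks of f. -/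

import Mathlib

open MeasureTheory Set

/-- Univariate half-period cosine functions: `c₀ ≡ 1`, `c_k(x) = √2 cos(πkx)` for `k ≥ 1`. -/
noncomputable def hpcFun (k : ℕ) (x : ℝ) : ℝ :=
  if k = 0 then 1 else Real.sqrt 2 * Real.cos (Real.pi * (k : ℝ) * x)

/-- Tensorized half-period cosine functions `c_k̄`. -/
noncomputable def hpc (d : ℕ) (k : Fin d → ℕ) (x : Fin d → ℝ) : ℝ :=
  ∏ i, hpcFun (k i) (x i)

/-!
A product of two half-period cosines is a linear combination of half-period cosines, so their span
is a point-separating algebra of continuous functions on the cube, dense by Stone–Weierstrass; an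
integrable function all of whose cosine coefficients vanish is therefore zero almost everywhere.
Consequently, by orthonormality, an integrable function with absolutely summable coefficients
coincides almost everywhere with its cosine series, and pairing that series with `f` termwise gives
`∫ f η = ∑ ⟨f, c_k̄⟩⟨η, c_k̄⟩`. Multiplying the terms of this absolutely convergent series by a
nonnegative partition of unity only redistributes their mass and changes neither absolute
convergence nor the sum.

For a Schwartz function `η`, Fourier inversion writes the coefficients as integrals of products of
univariate coefficients of exponentials, which two integrations by parts bound by a constant times
`(1 + w²) / (k + 1)²`; the Fourier transform of `η` absorbs the polynomial growth in the frequency.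
-/

section Univariate

/-- The normalising factor of `hpcFun k`: half-period cosines are `hpcScale k * cos (π k x)`,
uniformly in `k`. -/
noncomputable def hpcScale (k : ℕ) : ℝ :=
  if k = 0 then 1 else √2

theorem hpcFun_eq_scale_mul_cos (k : ℕ) (x : ℝ) :
    hpcFun k x = hpcScale k * Real.cos (Real.pi * k * x) := by
  by_cases hk : k = 0 <;> simp [hpcFun, hpcScale, hk]

theorem hpcScale_pos (k : ℕ) : 0 < hpcScale k := by
  unfold hpcScale
  split_ifs <;> positivity

theorem hpcScale_le (k : ℕ) : hpcScale k ≤ √2 := by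
  unfold hpcScale
  split_ifs
  · exact Real.one_le_sqrt.mpr one_le_two
  · exact le_rfl

theorem continuous_hpcFun (k : ℕ) : Continuous (hpcFun k) := by
  simp only [funext (hpcFun_eq_scale_mul_cos k)]
  fun_prop

theorem abs_hpcFun_le (k : ℕ) (x : ℝ) : |hpcFun k x| ≤ √2 := by
  rw [hpcFun_eq_scale_mul_cos, abs_mul, abs_of_pos (hpcScale_pos k)]
  exact (mul_le_of_le_one_right (hpcScale_pos k).le (Real.abs_cos_le_one _)).trans (hpcScale_le k)

theorem hpcFun_mul_hpcFun (k l : ℕ) (x : ℝ) :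
    hpcFun k x * hpcFun l x = hpcScale k * hpcScale l / 2 *
      ((hpcScale (k + l))⁻¹ * hpcFun (k + l) x +
        (hpcScale (k - l : ℤ).natAbs)⁻¹ * hpcFun (k - l : ℤ).natAbs x) := by
  have cos_natAbs : Real.cos (Real.pi * (k - l : ℤ).natAbs * x) =
      Real.cos (Real.pi * k * x - Real.pi * l * x) := by
    rw [Nat.cast_natAbs, ← Real.cos_abs, ← Real.cos_abs (_ - _), ← sub_mul, ← mul_sub]
    simp only [abs_mul, Int.cast_abs, abs_abs, Int.cast_sub, Int.cast_natCast]
  simp only [hpcFun_eq_scale_mul_cos, inv_mul_cancel_left₀ (hpcScale_pos _).ne', cos_natAbs,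
    Nat.cast_add, mul_add, add_mul, Real.cos_add, Real.cos_sub]
  ring

theorem hpcFun_mul_hpcFun_mem_span (k l : ℕ) :
    hpcFun k * hpcFun l ∈ Submodule.span ℝ (range hpcFun) := by
  have hmem (m : ℕ) : hpcFun m ∈ Submodule.span ℝ (range hpcFun) :=
    Submodule.subset_span (mem_range_self m)
  have hmul : hpcFun k * hpcFun l = (hpcScale k * hpcScale l / 2) •
      ((hpcScale (k + l))⁻¹ • hpcFun (k + l) +
        (hpcScale (k - l : ℤ).natAbs)⁻¹ • hpcFun (k - l : ℤ).natAbs) :=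
    funext (hpcFun_mul_hpcFun k l)
  rw [hmul]
  exact Submodule.smul_mem _ _ (add_mem (Submodule.smul_mem _ _ (hmem _))
    (Submodule.smul_mem _ _ (hmem _)))

theorem integral_hpcFun (k : ℕ) : ∫ x in (0 : ℝ)..1, hpcFun k x = if k = 0 then 1 else 0 := by
  split_ifs with hk
  · simp [hpcFun, hk]
  · have hπk : Real.pi * k ≠ 0 := mul_ne_zero Real.pi_ne_zero (Nat.cast_ne_zero.mpr hk)
    have hsin : Real.sin (Real.pi * k) = 0 := mul_comm Real.pi k ▸ Real.sin_nat_mul_pi k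
    simp [hpcFun_eq_scale_mul_cos, intervalIntegral.integral_comp_mul_left _ hπk, hsin]

theorem integral_hpcFun_mul_hpcFun (k l : ℕ) :
    ∫ x in (0 : ℝ)..1, hpcFun k x * hpcFun l x = if k = l then 1 else 0 := by
  have hint (c : ℝ) (m : ℕ) : IntervalIntegrable (fun x => c * hpcFun m x) volume 0 1 :=
    ((continuous_hpcFun m).const_mul c).intervalIntegrable 0 1
  simp only [hpcFun_mul_hpcFun, intervalIntegral.integral_const_mul,
    intervalIntegral.integral_add (hint _ _) (hint _ _), integral_hpcFun, Nat.add_eq_zero_iff,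
    Int.natAbs_eq_zero, sub_eq_zero, Nat.cast_inj]
  rcases eq_or_ne k l with rfl | hkl
  · by_cases hk : k = 0 <;> norm_num [hpcScale, hk]
  · have : ¬(k = 0 ∧ l = 0) := fun h => hkl (h.1.trans h.2.symm)
    simp [hkl, this]

end Univariate

section Products

theorem prod_mem_span_range_prod {R ι : Type*} [CommSemiring R] [Fintype ι] {α κ : ι → Type*}
    {e : ∀ i, κ i → α i → R} {F : ∀ i, α i → R}
    (hF : ∀ i, F i ∈ Submodule.span R (range (e i))) :
    (fun x : ∀ i, α i => ∏ i, F i (x i)) ∈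
      Submodule.span R (range fun (k : ∀ i, κ i) (x : ∀ i, α i) => ∏ i, e i (k i) (x i)) := by
  classical
  choose c hc using fun i => Finsupp.mem_span_range_iff_exists_finsupp.mp (hF i)
  have hexpand : (fun x : ∀ i, α i => ∏ i, F i (x i)) =
      ∑ k ∈ Fintype.piFinset fun i => (c i).support,
        (∏ i, c i (k i)) • fun x : ∀ i, α i => ∏ i, e i (k i) (x i) := by
    ext x
    simp only [← hc, Finsupp.sum, Finset.sum_apply, Pi.smul_apply, smul_eq_mul,
      Finset.prod_univ_sum, Finset.prod_mul_distrib]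
  rw [hexpand]
  exact Submodule.sum_mem _ fun k _ =>
    Submodule.smul_mem _ _ (Submodule.subset_span (mem_range_self k))

theorem summable_norm_and_hasSum_prod_pi {R : Type*} [NormedCommRing R] [CompleteSpace R] {d : ℕ}
    {κ : Fin d → Type*} {g : ∀ i, κ i → R} {s : Fin d → R}
    (hsummable : ∀ i, Summable fun k => ‖g i k‖) (hsum : ∀ i, HasSum (g i) (s i)) :
    Summable (fun k : ∀ i, κ i => ‖∏ i, g i (k i)‖) ∧
      HasSum (fun k : ∀ i, κ i => ∏ i, g i (k i)) (∏ i, s i) := by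
  induction d with
  | zero => exact ⟨(hasSum_fintype _).summable, by simp⟩
  | succ d ih =>
    obtain ⟨htail, hsum_tail⟩ := ih (fun i => hsummable i.succ) (fun i => hsum i.succ)
    have hprod := (hsummable 0).mul_norm htail
    rw [← (Fin.consEquiv κ).summable_iff, ← (Fin.consEquiv κ).hasSum_iff]
    simpa only [Function.comp_def, Fin.consEquiv_apply, Fin.prod_univ_succ, Fin.cons_zero,
      Fin.cons_succ] using And.intro hprod ((hsum 0).mul hsum_tail hprod.of_norm)

theorem integral_Icc_prod {𝕜 ι : Type*} [RCLike 𝕜] [Fintype ι] {a b : ι → ℝ} (hab : a ≤ b)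
    (F : ι → ℝ → 𝕜) :
    ∫ x in Icc a b, ∏ i, F i (x i) = ∏ i, ∫ t in a i..b i, F i t := by
  rw [← pi_univ_Icc, volume_pi, Measure.restrict_pi_pi, integral_fintype_prod_eq_prod]
  simp only [intervalIntegral.integral_of_le (hab _), integral_Icc_eq_integral_Ioc]

end Products

section Tensor

variable {d : ℕ}

theorem continuous_hpc (k : Fin d → ℕ) : Continuous (hpc d k) :=
  continuous_finsetProd _ fun i _ => (continuous_hpcFun (k i)).comp (continuous_apply i)

theorem abs_hpc_le (k : Fin d → ℕ) (x : Fin d → ℝ) : |hpc d k x| ≤ √2 ^ d := by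
  rw [hpc, Finset.abs_prod]
  simpa using Finset.prod_le_prod (s := Finset.univ) (fun _ _ => abs_nonneg _)
    fun i _ => abs_hpcFun_le (k i) (x i)

theorem integral_hpc_mul_hpc (k l : Fin d → ℕ) :
    ∫ x in Icc (0 : Fin d → ℝ) 1, hpc d k x * hpc d l x = if k = l then 1 else 0 := by
  simp only [hpc, ← Finset.prod_mul_distrib]
  rw [integral_Icc_prod zero_le_one fun i t => hpcFun (k i) t * hpcFun (l i) t]
  simp only [Pi.zero_apply, Pi.one_apply, integral_hpcFun_mul_hpcFun, funext_iff,
    Finset.prod_boole, Finset.mem_univ, true_implies]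

theorem hpc_mul_hpc_mem_span (k l : Fin d → ℕ) :
    hpc d k * hpc d l ∈ Submodule.span ℝ (range (hpc d)) := by
  have hprod : hpc d k * hpc d l = fun x => ∏ i, (hpcFun (k i) * hpcFun (l i)) (x i) := by
    ext x
    simp only [Pi.mul_apply, hpc, Finset.prod_mul_distrib]
  rw [hprod]
  exact prod_mem_span_range_prod fun i => hpcFun_mul_hpcFun_mem_span (k i) (l i)

end Tensor

section Completeness

variable {d : ℕ}

/-- The function `hpc d k` as an element of the Banach algebra of real continuous functions on the
unit cube. -/
noncomputable def hpcCube (d : ℕ) (k : Fin d → ℕ) : C(Icc (0 : Fin d → ℝ) 1, ℝ) :=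
  ⟨fun x => hpc d k x, (continuous_hpc k).comp continuous_subtype_val⟩

theorem hpcCube_zero : hpcCube d 0 = 1 := by
  ext x
  simp [hpcCube, hpc, hpcFun]

theorem hpcCube_mul_hpcCube_mem_span (k l : Fin d → ℕ) :
    hpcCube d k * hpcCube d l ∈ Submodule.span ℝ (range (hpcCube d)) := by
  obtain ⟨c, hc⟩ := Finsupp.mem_span_range_iff_exists_finsupp.mp (hpc_mul_hpc_mem_span k l)
  refine Finsupp.mem_span_range_iff_exists_finsupp.mpr ⟨c, ?_⟩
  ext x
  simpa [Finsupp.sum, hpcCube] using congrFun hc x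

/-- The trigonometric polynomials in half-period cosines on the unit cube. -/
noncomputable def hpcSubalgebra (d : ℕ) : Subalgebra ℝ C(Icc (0 : Fin d → ℝ) 1, ℝ) :=
  (Submodule.span ℝ (range (hpcCube d))).toSubalgebra
    (hpcCube_zero (d := d) ▸ Submodule.subset_span (mem_range_self 0))
    fun p q hp hq => by
      have hmul := Submodule.mul_mem_mul hp hq
      rw [Submodule.span_mul_span] at hmul
      refine Submodule.span_le.mpr ?_ hmul
      rintro _ ⟨_, ⟨k, rfl⟩, _, ⟨l, rfl⟩, rfl⟩
      exact hpcCube_mul_hpcCube_mem_span k l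

theorem hpc_single_one (i : Fin d) (x : Fin d → ℝ) :
    hpc d (Pi.single i 1) x = √2 * Real.cos (Real.pi * x i) := by
  rw [hpc, Finset.prod_eq_single i (fun j _ hj => by simp [hpcFun, hj]) (by simp)]
  simp [hpcFun]

theorem separatesPoints_hpcSubalgebra : (hpcSubalgebra d).SeparatesPoints := by
  intro x y hxy
  obtain ⟨i, hi⟩ := Function.ne_iff.mp (Subtype.coe_injective.ne hxy)
  refine ⟨_, ⟨hpcCube d (Pi.single i 1), Submodule.subset_span (mem_range_self _), rfl⟩, ?_⟩
  have hmem (z : Icc (0 : Fin d → ℝ) 1) : Real.pi * z.1 i ∈ Icc 0 Real.pi :=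
    ⟨mul_nonneg Real.pi_pos.le (z.2.1 i), mul_le_of_le_one_right Real.pi_pos.le (z.2.2 i)⟩
  have hcos : Real.cos (Real.pi * x.1 i) ≠ Real.cos (Real.pi * y.1 i) :=
    Real.injOn_cos.ne (hmem x) (hmem y) ((mul_right_injective₀ Real.pi_ne_zero).ne hi)
  simpa [hpcCube, hpc_single_one] using hcos

theorem topologicalClosure_span_hpcCube :
    (Submodule.span ℝ (range (hpcCube d))).topologicalClosure = ⊤ :=
  congrArg Subalgebra.toSubmodule
    (ContinuousMap.subalgebra_topologicalClosure_eq_top_of_separatesPoints (hpcSubalgebra d)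
      separatesPoints_hpcSubalgebra)

theorem integral_smul_eq_zero_of_dense_span {X E : Type*} [TopologicalSpace X] [CompactSpace X]
    [MeasurableSpace X] [OpensMeasurableSpace X] [NormedAddCommGroup E] [NormedSpace ℝ E]
    {μ : Measure X} {g : X → E} (hg : Integrable g μ) {s : Set C(X, ℝ)}
    (hs : (Submodule.span ℝ s).topologicalClosure = ⊤) (hzero : ∀ p ∈ s, ∫ x, p x • g x ∂μ = 0)
    (p : C(X, ℝ)) : ∫ x, p x • g x ∂μ = 0 := by
  have hint (q : C(X, ℝ)) : Integrable (fun x => q x • g x) μ :=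
    hg.bdd_smul ‖q‖ q.continuous.measurable.aestronglyMeasurable (.of_forall q.norm_coe_le_norm)
  let L : C(X, ℝ) →L[ℝ] E := LinearMap.mkContinuous
    { toFun := fun q => ∫ x, q x • g x ∂μ
      map_add' := fun q r => by
        simp only [ContinuousMap.add_apply, add_smul, integral_add (hint q) (hint r)]
      map_smul' := fun c q => by
        simp only [ContinuousMap.smul_apply, smul_eq_mul, mul_smul, integral_smul,
          RingHom.id_apply] }
    (∫ x, ‖g x‖ ∂μ) fun q => by
      refine (norm_integral_le_of_norm_le (hg.norm.mul_const ‖q‖) (.of_forall fun x => ?_)).trans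
        (integral_mul_const _ _).le
      rw [norm_smul, mul_comm]
      exact mul_le_mul_of_nonneg_left (q.norm_coe_le_norm x) (norm_nonneg _)
  have hker : (Submodule.span ℝ s).topologicalClosure ≤ L.ker :=
    Submodule.topologicalClosure_minimal _ (Submodule.span_le.mpr hzero) L.isClosed_ker
  exact hker (hs ▸ Submodule.mem_top)

/-- The half-period cosine coefficient `⟨f, c_k̄⟩` of a function `f` on the unit cube. -/
noncomputable def hpcCoeff {E : Type*} [NormedAddCommGroup E] [NormedSpace ℝ E]
    (f : (Fin d → ℝ) → E) (k : Fin d → ℕ) : E :=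
  ∫ x in Icc (0 : Fin d → ℝ) 1, hpc d k x • f x

theorem ae_eq_zero_of_hpcCoeff_eq_zero {E : Type*} [NormedAddCommGroup E] [NormedSpace ℝ E]
    [CompleteSpace E] {g : (Fin d → ℝ) → E} (hg : IntegrableOn g (Icc 0 1))
    (hzero : ∀ k, hpcCoeff g k = 0) :
    ∀ᵐ x ∂volume.restrict (Icc 0 1), g x = 0 := by
  refine ae_eq_zero_of_integral_contDiff_smul_eq_zero hg.integrable.locallyIntegrable
    fun p hp _ => ?_
  have hcube (q : (Fin d → ℝ) → ℝ) : ∫ x in Icc (0 : Fin d → ℝ) 1, q x • g x =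
      ∫ x : Icc (0 : Fin d → ℝ) 1, q x • g x ∂Measure.comap Subtype.val volume :=
    (integral_subtype_comap measurableSet_Icc fun x => q x • g x).symm
  rw [hcube]
  refine integral_smul_eq_zero_of_dense_span
    ((integrableOn_iff_comap_subtypeVal measurableSet_Icc).mp hg) topologicalClosure_span_hpcCube
    ?_ ⟨fun x : Icc (0 : Fin d → ℝ) 1 => p x, hp.continuous.comp continuous_subtype_val⟩
  rintro _ ⟨k, rfl⟩
  exact (hcube (hpc d k)).symm.trans (hzero k)

end Completeness

section Series

variable {d : ℕ}

section NormedSpace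

variable {E : Type*} [NormedAddCommGroup E] [NormedSpace ℝ E] {f g : (Fin d → ℝ) → E}

theorem integrableOn_hpc_smul (hf : IntegrableOn f (Icc 0 1)) (k : Fin d → ℕ) :
    IntegrableOn (fun x => hpc d k x • f x) (Icc 0 1) :=
  Integrable.bdd_smul hf (√2 ^ d) (continuous_hpc k).aestronglyMeasurable
    (.of_forall (abs_hpc_le k))

theorem hpcCoeff_sub (hf : IntegrableOn f (Icc 0 1)) (hg : IntegrableOn g (Icc 0 1))
    (k : Fin d → ℕ) : hpcCoeff (fun x => f x - g x) k = hpcCoeff f k - hpcCoeff g k := by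
  simp only [hpcCoeff, smul_sub]
  exact integral_sub (integrableOn_hpc_smul hf k) (integrableOn_hpc_smul hg k)

theorem norm_hpcCoeff_le (hf : IntegrableOn f (Icc 0 1)) (k : Fin d → ℕ) :
    ‖hpcCoeff f k‖ ≤ √2 ^ d * ∫ x in Icc (0 : Fin d → ℝ) 1, ‖f x‖ := by
  rw [← integral_const_mul]
  refine norm_integral_le_of_norm_le (hf.norm.const_mul _) (.of_forall fun x => ?_)
  rw [norm_smul]
  exact mul_le_mul_of_nonneg_right (abs_hpc_le k x) (norm_nonneg _)

end NormedSpace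

theorem norm_mul_hpc_le (c : ℂ) (k : Fin d → ℕ) (x : Fin d → ℝ) :
    ‖c * (hpc d k x : ℂ)‖ ≤ ‖c‖ * √2 ^ d := by
  rw [norm_mul, Complex.norm_real]
  exact mul_le_mul_of_nonneg_left (abs_hpc_le k x) (norm_nonneg c)

theorem hasSum_hpcCoeff_mul {f : (Fin d → ℝ) → ℂ} (hf : IntegrableOn f (Icc 0 1))
    {b : (Fin d → ℕ) → ℂ} (hb : Summable fun k => ‖b k‖) :
    HasSum (fun k => hpcCoeff f k * b k)
      (∫ x in Icc (0 : Fin d → ℝ) 1, f x * ∑' k, b k * (hpc d k x : ℂ)) := by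
  have hbound (k : Fin d → ℕ) (x : Fin d → ℝ) :
      ‖f x * (b k * (hpc d k x : ℂ))‖ ≤ ‖f x‖ * (‖b k‖ * √2 ^ d) := by
    rw [norm_mul]
    exact mul_le_mul_of_nonneg_left (norm_mul_hpc_le (b k) k x) (norm_nonneg _)
  have hint (k : Fin d → ℕ) :
      IntegrableOn (fun x => f x * (b k * (hpc d k x : ℂ))) (Icc 0 1) :=
    hf.integrable.mul_bdd (c := ‖b k‖ * √2 ^ d)
      (continuous_const.mul (Complex.continuous_ofReal.comp
        (continuous_hpc k))).aestronglyMeasurable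
      (.of_forall (norm_mul_hpc_le (b k) k))
  have hnorm (k : Fin d → ℕ) : ∫ x in Icc (0 : Fin d → ℝ) 1, ‖f x * (b k * (hpc d k x : ℂ))‖ ≤
      (∫ x in Icc (0 : Fin d → ℝ) 1, ‖f x‖) * (‖b k‖ * √2 ^ d) := by
    rw [← integral_mul_const]
    exact integral_mono (hint k).norm (hf.norm.mul_const _) (hbound k)
  have hseries := hasSum_integral_of_summable_integral_norm hint
    (.of_nonneg_of_le (fun _ => integral_nonneg fun _ => norm_nonneg _) hnorm
      ((hb.mul_right (√2 ^ d)).mul_left _))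
  simp only [tsum_mul_left] at hseries
  convert! hseries using 2 with k
  rw [hpcCoeff, ← integral_mul_const]
  refine integral_congr_ae (.of_forall fun x => ?_)
  simp only [Complex.real_smul]
  ring

theorem hpcCoeff_hpc (k l : Fin d → ℕ) :
    hpcCoeff (fun x => (hpc d l x : ℂ)) k = if k = l then 1 else 0 := by
  simp only [hpcCoeff, Complex.real_smul, ← Complex.ofReal_mul]
  rw [integral_complex_ofReal, integral_hpc_mul_hpc]
  split_ifs <;> simp

theorem continuous_tsum_mul_hpc {b : (Fin d → ℕ) → ℂ} (hb : Summable fun k => ‖b k‖) :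
    Continuous fun x => ∑' k, b k * (hpc d k x : ℂ) :=
  continuous_tsum
    (fun k => continuous_const.mul (Complex.continuous_ofReal.comp (continuous_hpc k)))
    (hb.mul_right (√2 ^ d)) fun k x => norm_mul_hpc_le (b k) k x

theorem hpcCoeff_tsum_mul_hpc {b : (Fin d → ℕ) → ℂ} (hb : Summable fun k => ‖b k‖)
    (l : Fin d → ℕ) : hpcCoeff (fun x => ∑' k, b k * (hpc d k x : ℂ)) l = b l := by
  have hcont : Continuous fun x => (hpc d l x : ℂ) :=
    Complex.continuous_ofReal.comp (continuous_hpc l)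
  have hseries := hasSum_hpcCoeff_mul (hcont.continuousOn.integrableOn_compact isCompact_Icc) hb
  simp only [hpcCoeff_hpc, ite_mul, one_mul, zero_mul] at hseries
  simpa only [hpcCoeff, Complex.real_smul] using
    hseries.unique (hasSum_ite_eq l (b l) |>.congr_fun fun k => by split_ifs with h <;> simp [h])

theorem ae_eq_tsum_hpcCoeff_mul_hpc {g : (Fin d → ℝ) → ℂ} (hg : IntegrableOn g (Icc 0 1))
    (hsummable : Summable fun k => ‖hpcCoeff g k‖) :
    ∀ᵐ x ∂volume.restrict (Icc 0 1), g x = ∑' k, hpcCoeff g k * (hpc d k x : ℂ) := by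
  have hseries : IntegrableOn (fun x => ∑' k, hpcCoeff g k * (hpc d k x : ℂ)) (Icc 0 1) :=
    (continuous_tsum_mul_hpc hsummable).continuousOn.integrableOn_compact isCompact_Icc
  have hzero (k : Fin d → ℕ) :
      hpcCoeff (fun x => g x - ∑' k, hpcCoeff g k * (hpc d k x : ℂ)) k = 0 := by
    rw [hpcCoeff_sub hg hseries, hpcCoeff_tsum_mul_hpc hsummable, sub_self]
  filter_upwards [ae_eq_zero_of_hpcCoeff_eq_zero (hg.sub hseries) hzero] with x hx
  exact sub_eq_zero.mp hx

theorem hasSum_hpcCoeff_mul_hpcCoeff {f g : (Fin d → ℝ) → ℂ} (hf : IntegrableOn f (Icc 0 1))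
    (hg : IntegrableOn g (Icc 0 1)) (hsummable : Summable fun k => ‖hpcCoeff g k‖) :
    HasSum (fun k => hpcCoeff f k * hpcCoeff g k) (∫ x in Icc (0 : Fin d → ℝ) 1, f x * g x) := by
  have hcongr : ∫ x in Icc (0 : Fin d → ℝ) 1, f x * g x =
      ∫ x in Icc (0 : Fin d → ℝ) 1, f x * ∑' k, hpcCoeff g k * (hpc d k x : ℂ) :=
    integral_congr_ae <| (ae_eq_tsum_hpcCoeff_mul_hpc hg hsummable).mono fun x hx =>
      congrArg (f x * ·) hx
  exact hcongr ▸ hasSum_hpcCoeff_mul hf hsummable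

theorem summable_norm_and_hasSum_partition_smul {ι κ E : Type*} [NormedAddCommGroup E]
    [NormedSpace ℝ E] [CompleteSpace E] {p : ι → κ → ℝ} (hnonneg : ∀ j k, 0 ≤ p j k)
    (hsum : ∀ k, HasSum (fun j => p j k) 1) {a : κ → E} (ha : Summable fun k => ‖a k‖) :
    Summable (fun jk : ι × κ => ‖p jk.1 jk.2 • a jk.2‖) ∧
      HasSum (fun jk : ι × κ => p jk.1 jk.2 • a jk.2) (∑' k, a k) := by
  have hnorm (k : κ) : HasSum (fun j => ‖p j k • a k‖) ‖a k‖ := by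
    simpa only [norm_smul, Real.norm_of_nonneg (hnonneg _ _), one_mul] using
      (hsum k).mul_right ‖a k‖
  have hswap : Summable fun kj : κ × ι => ‖p kj.2 kj.1 • a kj.1‖ := by
    rw [summable_prod_of_nonneg fun _ => norm_nonneg _]
    exact ⟨fun k => (hnorm k).summable, ha.congr fun k => (hnorm k).tsum_eq.symm⟩
  have hfiber (k : κ) : HasSum (fun j => p j k • a k) (a k) := by
    simpa only [one_smul] using (hsum k).smul_const (a k)
  refine ⟨(Equiv.prodComm κ ι).summable_iff.mp hswap, (Equiv.prodComm κ ι).hasSum_iff.mp ?_⟩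
  exact (hswap.of_norm.hasSum.prod_fiberwise hfiber).tsum_eq ▸ hswap.of_norm.hasSum

end Series

section Decay

open scoped FourierTransform

theorem hasDerivAt_hpcFun (k : ℕ) (x : ℝ) :
    HasDerivAt (hpcFun k) (-(hpcScale k * (Real.pi * k * Real.sin (Real.pi * k * x)))) x := by
  have hcos := ((hasDerivAt_id x).const_mul (Real.pi * k)).cos.const_mul (hpcScale k)
  simp only [← hpcFun_eq_scale_mul_cos, id] at hcos
  exact hcos.congr_deriv (by ring)

theorem integral_hpcFun_smul_eq {E : Type*} [NormedAddCommGroup E] [NormedSpace ℝ E]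
    [CompleteSpace E] (k : ℕ) {u u' u'' : ℝ → E} (hu : ∀ x, HasDerivAt u (u' x) x)
    (hu' : ∀ x, HasDerivAt u' (u'' x) x) (hu'' : Continuous u'') :
    (Real.pi * k) ^ 2 • ∫ x in (0 : ℝ)..1, hpcFun k x • u x =
      hpcFun k 1 • u' 1 - hpcFun k 0 • u' 0 - ∫ x in (0 : ℝ)..1, hpcFun k x • u'' x := by
  have hu_cont : Continuous u := continuous_iff_continuousAt.mpr fun x => (hu x).continuousAt
  have hint_u : IntervalIntegrable (fun x => (Real.pi * k) ^ 2 • hpcFun k x • u x) volume 0 1 :=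
    (((continuous_hpcFun k).smul hu_cont).const_smul _).intervalIntegrable 0 1
  have hint_u'' : IntervalIntegrable (fun x => hpcFun k x • u'' x) volume 0 1 :=
    ((continuous_hpcFun k).smul hu'').intervalIntegrable 0 1
  -- Both integrations by parts at once: the bilinear concomitant of `hpcFun k` and `u`.
  have hderiv (x : ℝ) : HasDerivAt
      (fun x => (hpcScale k * (Real.pi * k * Real.sin (Real.pi * k * x))) • u x +
        hpcFun k x • u' x)
      ((Real.pi * k) ^ 2 • hpcFun k x • u x + hpcFun k x • u'' x) x := by
    have hsin := (((hasDerivAt_id x).const_mul (Real.pi * k)).sin.const_mul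
      (Real.pi * k)).const_mul (hpcScale k)
    refine ((hsin.smul (hu x)).add ((hasDerivAt_hpcFun k x).smul (hu' x))).congr_deriv ?_
    simp only [hpcFun_eq_scale_mul_cos, id]
    module
  have hsin_one : Real.sin (Real.pi * k) = 0 := mul_comm Real.pi k ▸ Real.sin_nat_mul_pi k
  have hftc := intervalIntegral.integral_eq_sub_of_hasDerivAt (fun x _ => hderiv x)
    (hint_u.add hint_u'')
  rw [intervalIntegral.integral_add hint_u hint_u'', intervalIntegral.integral_smul] at hftc
  simp only [mul_one, hsin_one, mul_zero, Real.sin_zero, zero_smul, zero_add] at hftc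
  exact eq_sub_of_add_eq hftc

theorem norm_hpcFun_smul_le {E : Type*} [NormedAddCommGroup E] [NormedSpace ℝ E] {v : E} {C : ℝ}
    (hv : ‖v‖ ≤ C) (k : ℕ) (x : ℝ) : ‖hpcFun k x • v‖ ≤ √2 * C := by
  rw [norm_smul]
  exact mul_le_mul (abs_hpcFun_le k x) hv (norm_nonneg v) (Real.sqrt_nonneg 2)

theorem norm_integral_hpcFun_smul_le {E : Type*} [NormedAddCommGroup E] [NormedSpace ℝ E] (k : ℕ)
    {u : ℝ → E} {C : ℝ} (hu : ∀ x, ‖u x‖ ≤ C) :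
    ‖∫ x in (0 : ℝ)..1, hpcFun k x • u x‖ ≤ √2 * C := by
  simpa using intervalIntegral.norm_integral_le_of_norm_le_const (a := 0) (b := 1)
    fun x _ => norm_hpcFun_smul_le (hu x) k x

theorem sq_mul_norm_integral_hpcFun_smul_le {E : Type*} [NormedAddCommGroup E] [NormedSpace ℝ E]
    [CompleteSpace E] (k : ℕ) {u u' u'' : ℝ → E} (hu : ∀ x, HasDerivAt u (u' x) x)
    (hu' : ∀ x, HasDerivAt u' (u'' x) x) (hu'' : Continuous u'') {A B : ℝ}
    (hA : ∀ x, ‖u' x‖ ≤ A) (hB : ∀ x, ‖u'' x‖ ≤ B) :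
    (Real.pi * k) ^ 2 * ‖∫ x in (0 : ℝ)..1, hpcFun k x • u x‖ ≤ √2 * (2 * A + B) := by
  calc (Real.pi * k) ^ 2 * ‖∫ x in (0 : ℝ)..1, hpcFun k x • u x‖
      = ‖(Real.pi * k) ^ 2 • ∫ x in (0 : ℝ)..1, hpcFun k x • u x‖ := by
        rw [norm_smul, Real.norm_of_nonneg (sq_nonneg _)]
    _ ≤ ‖hpcFun k 1 • u' 1‖ + ‖hpcFun k 0 • u' 0‖ +
          ‖∫ x in (0 : ℝ)..1, hpcFun k x • u'' x‖ := by
        rw [integral_hpcFun_smul_eq k hu hu' hu'']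
        exact (norm_sub_le _ _).trans (add_le_add_left (norm_sub_le _ _) _)
    _ ≤ √2 * A + √2 * A + √2 * B :=
        add_le_add_three (norm_hpcFun_smul_le (hA 1) k 1) (norm_hpcFun_smul_le (hA 0) k 0)
          (norm_integral_hpcFun_smul_le k hB)
    _ = √2 * (2 * A + B) := by ring

/-- The half-period cosine coefficient on `[0, 1]` of the exponential `t ↦ exp (i w t)`. -/
noncomputable def hpcExpCoeff (k : ℕ) (w : ℝ) : ℂ :=
  ∫ t in (0 : ℝ)..1, hpcFun k t • Complex.exp (w * t * Complex.I)

theorem norm_exp_mul_mul_I (w t : ℝ) : ‖Complex.exp (w * t * Complex.I)‖ = 1 := by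
  exact_mod_cast Complex.norm_exp_ofReal_mul_I (w * t)

theorem sq_mul_norm_hpcExpCoeff_le (k : ℕ) (w : ℝ) :
    (Real.pi * k) ^ 2 * ‖hpcExpCoeff k w‖ ≤ √2 * (2 * |w| + |w| ^ 2) := by
  have hderiv (x : ℝ) : HasDerivAt (fun t : ℝ => Complex.exp (w * t * Complex.I))
      (w * Complex.I * Complex.exp (w * x * Complex.I)) x := by
    have hlin := ((hasDerivAt_id x).ofReal_comp.const_mul (w : ℂ)).mul_const Complex.I
    exact hlin.cexp.congr_deriv (by simp [mul_comm])
  refine sq_mul_norm_integral_hpcFun_smul_le k hderiv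
    (fun x => (hderiv x).const_mul (w * Complex.I)) (by fun_prop) (fun x => ?_) fun x => ?_ <;>
  simp [norm_exp_mul_mul_I, sq]

theorem norm_hpcExpCoeff_le (k : ℕ) (w : ℝ) :
    ‖hpcExpCoeff k w‖ ≤ 2 * √2 * (1 + w ^ 2) / ((k : ℝ) + 1) ^ 2 := by
  rw [le_div_iff₀ (by positivity), mul_comm]
  rcases Nat.eq_zero_or_pos k with rfl | hk
  · have hnorm : ‖hpcExpCoeff 0 w‖ ≤ √2 * 1 :=
      norm_integral_hpcFun_smul_le 0 fun t => (norm_exp_mul_mul_I w t).le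
    have hsqrt : √2 * 1 ≤ √2 * (2 * (1 + w ^ 2)) := by
      gcongr
      linarith [sq_nonneg w]
    simpa [mul_assoc, mul_left_comm] using hnorm.trans hsqrt
  · have hk' : (1 : ℝ) ≤ k := Nat.one_le_cast.mpr hk
    have hle : (k + 1 : ℝ) ≤ Real.pi * k := by nlinarith [Real.pi_gt_three]
    calc ((k : ℝ) + 1) ^ 2 * ‖hpcExpCoeff k w‖
        ≤ (Real.pi * k) ^ 2 * ‖hpcExpCoeff k w‖ := by gcongr
      _ ≤ √2 * (2 * |w| + |w| ^ 2) := sq_mul_norm_hpcExpCoeff_le k w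
      _ ≤ √2 * (2 * (1 + |w| ^ 2)) := by
        gcongr
        linarith [two_mul_le_add_sq 1 |w|]
      _ = 2 * √2 * (1 + w ^ 2) := by
        rw [sq_abs]
        ring

variable {d : ℕ}

theorem exp_inner_eq_prod (ξ : EuclideanSpace ℝ (Fin d)) (x : Fin d → ℝ) :
    Complex.exp (↑(2 * Real.pi * inner ℝ ξ (WithLp.toLp 2 x)) * Complex.I) =
      ∏ i, Complex.exp ((2 * Real.pi * ξ i : ℝ) * x i * Complex.I) := by
  rw [← Complex.exp_sum, ← Finset.sum_mul, PiLp.inner_apply, Finset.mul_sum]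
  congr 2
  push_cast
  refine Finset.sum_congr rfl fun i _ => ?_
  simp only [RCLike.inner_apply, conj_trivial]
  push_cast
  ring

theorem hpcCoeff_exp_inner (k : Fin d → ℕ) (ξ : EuclideanSpace ℝ (Fin d)) :
    hpcCoeff (fun x => Complex.exp (↑(2 * Real.pi * inner ℝ ξ (WithLp.toLp 2 x)) * Complex.I)) k =
      ∏ i, hpcExpCoeff (k i) (2 * Real.pi * ξ i) := by
  simp only [hpcCoeff, exp_inner_eq_prod, hpc, Complex.real_smul, Complex.ofReal_prod,
    ← Finset.prod_mul_distrib]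
  rw [integral_Icc_prod zero_le_one fun i t =>
    (hpcFun (k i) t : ℂ) * Complex.exp ((2 * Real.pi * ξ i : ℝ) * t * Complex.I)]
  simp only [hpcExpCoeff, Complex.real_smul, Pi.zero_apply, Pi.one_apply]

theorem hpcCoeff_fourierInv {h : EuclideanSpace ℝ (Fin d) → ℂ} (hh : Integrable h)
    (k : Fin d → ℕ) :
    hpcCoeff (fun x => 𝓕⁻ h (WithLp.toLp 2 x)) k =
      ∫ ξ, (∏ i, hpcExpCoeff (k i) (2 * Real.pi * ξ i)) * h ξ := by
  have hcont := continuous_hpc k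
  have : IsFiniteMeasure (volume.restrict (Icc (0 : Fin d → ℝ) 1)) :=
    isFiniteMeasure_restrict.mpr isCompact_Icc.measure_lt_top.ne
  have hint : Integrable (fun z : (Fin d → ℝ) × EuclideanSpace ℝ (Fin d) =>
      hpc d k z.1 • Complex.exp (↑(2 * Real.pi * inner ℝ z.2 (WithLp.toLp 2 z.1)) * Complex.I) *
        h z.2) ((volume.restrict (Icc 0 1)).prod volume) := by
    refine Integrable.bdd_mul (c := √2 ^ d) (hh.comp_snd _)
      (Continuous.aestronglyMeasurable (by fun_prop)) (.of_forall fun z => ?_)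
    rw [norm_smul, Complex.norm_exp_ofReal_mul_I, mul_one]
    exact abs_hpc_le k z.1
  simp only [← hpcCoeff_exp_inner, hpcCoeff, Real.fourierInv_eq', ← integral_smul,
    ← integral_mul_const, ← smul_mul_assoc, smul_eq_mul]
  exact integral_integral_swap hint

theorem norm_prod_hpcExpCoeff_le (k : Fin d → ℕ) (ξ : Fin d → ℝ) :
    ‖∏ i, hpcExpCoeff (k i) (ξ i)‖ ≤
      (2 * √2) ^ d * (∏ i, (1 + ξ i ^ 2)) * ∏ i, 1 / ((k i : ℝ) + 1) ^ 2 := by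
  rw [norm_prod]
  refine (Finset.prod_le_prod (fun _ _ => norm_nonneg _)
    fun i _ => norm_hpcExpCoeff_le (k i) (ξ i)).trans_eq ?_
  simp [Finset.prod_mul_distrib, div_eq_mul_inv]

theorem summable_prod_one_div_add_one_sq :
    Summable fun k : Fin d → ℕ => ∏ i, 1 / ((k i : ℝ) + 1) ^ 2 := by
  have hone : Summable fun n : ℕ => 1 / ((n : ℝ) + 1) ^ 2 := by
    exact_mod_cast (summable_nat_add_iff 1).mpr (Real.summable_one_div_nat_pow.mpr one_lt_two)
  exact (summable_norm_and_hasSum_prod_pi (fun _ => hone.norm) fun _ => hone.hasSum).2.summable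

theorem summable_norm_hpcCoeff_fourierInv {h : EuclideanSpace ℝ (Fin d) → ℂ}
    (hh : Integrable fun ξ => (∏ i, (1 + (2 * Real.pi * ξ i) ^ 2)) • h ξ) :
    Summable fun k => ‖hpcCoeff (fun x => 𝓕⁻ h (WithLp.toLp 2 x)) k‖ := by
  have hweight (ξ : EuclideanSpace ℝ (Fin d)) : 1 ≤ ∏ i, (1 + (2 * Real.pi * ξ i) ^ 2) :=
    Finset.one_le_prod fun i _ => le_add_of_nonneg_right (sq_nonneg _)
  have hh_int : Integrable h := by
    have hinv : Continuous fun ξ : EuclideanSpace ℝ (Fin d) =>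
        (∏ i, (1 + (2 * Real.pi * ξ i) ^ 2))⁻¹ :=
      Continuous.inv₀ (by fun_prop) fun ξ => (zero_lt_one.trans_le (hweight ξ)).ne'
    refine (hh.bdd_smul 1 hinv.aestronglyMeasurable (.of_forall fun ξ => ?_)).congr
      (.of_forall fun ξ => inv_smul_smul₀ (zero_lt_one.trans_le (hweight ξ)).ne' _)
    rw [norm_inv, Real.norm_of_nonneg (zero_le_one.trans (hweight ξ))]
    exact inv_le_one_of_one_le₀ (hweight ξ)
  refine .of_nonneg_of_le (fun _ => norm_nonneg _) (fun k => ?_)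
    ((summable_prod_one_div_add_one_sq (d := d)).mul_left
      ((2 * √2) ^ d * ∫ ξ, ‖(∏ i, (1 + (2 * Real.pi * ξ i) ^ 2)) • h ξ‖))
  rw [hpcCoeff_fourierInv hh_int, ← integral_const_mul, ← integral_mul_const]
  refine norm_integral_le_of_norm_le ((hh.norm.const_mul _).mul_const _) (.of_forall fun ξ => ?_)
  rw [norm_mul, norm_smul, Real.norm_of_nonneg (zero_le_one.trans (hweight ξ))]
  refine (mul_le_mul_of_nonneg_right (norm_prod_hpcExpCoeff_le k fun i => 2 * Real.pi * ξ i)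
    (norm_nonneg _)).trans_eq ?_
  ring

theorem hasTemperateGrowth_prod {V ι : Type*} [NormedAddCommGroup V] [NormedSpace ℝ V]
    {s : Finset ι} {u : ι → V → ℝ} (hu : ∀ i ∈ s, (u i).HasTemperateGrowth) :
    Function.HasTemperateGrowth fun x => ∏ i ∈ s, u i x := by
  classical
  induction s using Finset.induction_on with
  | empty => simp
  | insert i s hi ih =>
    simp only [Finset.prod_insert hi]
    exact (hu i (Finset.mem_insert_self i s)).mul
      (ih fun j hj => hu j (Finset.mem_insert_of_mem hj))

theorem summable_norm_hpcCoeff_schwartz (η : SchwartzMap (Fin d → ℝ) ℂ) :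
    Summable fun k => ‖hpcCoeff η k‖ := by
  let g : SchwartzMap (EuclideanSpace ℝ (Fin d)) ℂ :=
    SchwartzMap.compCLMOfContinuousLinearEquiv ℂ (EuclideanSpace.equiv (Fin d) ℝ) η
  let ψ : SchwartzMap (EuclideanSpace ℝ (Fin d)) ℂ := 𝓕 g
  have hη : (fun x => 𝓕⁻ ⇑ψ (WithLp.toLp 2 x)) = η := by
    rw [← SchwartzMap.fourierInv_coe, FourierTransform.fourierInv_fourier_eq g]
    rfl
  have hcoord (i : Fin d) :
      Function.HasTemperateGrowth fun ξ : EuclideanSpace ℝ (Fin d) => ξ i :=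
    (EuclideanSpace.proj (𝕜 := ℝ) i).hasTemperateGrowth
  have hweight : Function.HasTemperateGrowth fun ξ : EuclideanSpace ℝ (Fin d) =>
      ∏ i, (1 + (2 * Real.pi * ξ i) ^ 2) :=
    hasTemperateGrowth_prod fun i _ => by
      have := hcoord i
      fun_prop
  have hint := (SchwartzMap.smulLeftCLM ℂ
    (fun ξ : EuclideanSpace ℝ (Fin d) => ∏ i, (1 + (2 * Real.pi * ξ i) ^ 2)) ψ).integrable
      (μ := volume)
  rw [SchwartzMap.smulLeftCLM_apply hweight] at hint
  rw [← hη]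
  exact summable_norm_hpcCoeff_fourierInv hint

end Decay

theorem hasSum_prod_pi_one {d : ℕ} {ι : Fin d → Type*} {w : ∀ i, ι i → ℝ}
    (hsum : ∀ i, HasSum (w i) 1) :
    HasSum (fun j : ∀ i, ι i => ∏ i, w i (j i)) 1 := by
  have hnorm (i : Fin d) : Summable fun j => ‖w i j‖ := (hsum i).summable.norm
  simpa only [Finset.prod_const_one] using (summable_norm_and_hasSum_prod_pi hnorm hsum).2

theorem statement7_general {d : ℕ} {ι : Type*} {p : ι → (Fin d → ℕ) → ℝ}
    (hnonneg : ∀ j k, 0 ≤ p j k) (hsum : ∀ k, HasSum (fun j => p j k) 1)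
    {f g : (Fin d → ℝ) → ℂ} (hf : IntegrableOn f (Icc 0 1)) (hg : IntegrableOn g (Icc 0 1))
    (hsummable : Summable fun k => ‖hpcCoeff g k‖) :
    Summable (fun jk : ι × (Fin d → ℕ) =>
      ‖p jk.1 jk.2 • (hpcCoeff f jk.2 * hpcCoeff g jk.2)‖) ∧
    HasSum (fun jk : ι × (Fin d → ℕ) => p jk.1 jk.2 • (hpcCoeff f jk.2 * hpcCoeff g jk.2))
      (∫ x in Icc (0 : Fin d → ℝ) 1, f x * g x) := by
  have hnorm : Summable fun k => ‖hpcCoeff f k * hpcCoeff g k‖ := by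
    refine .of_nonneg_of_le (fun _ => norm_nonneg _) (fun k => ?_) (hsummable.mul_left
      (√2 ^ d * ∫ x in Icc (0 : Fin d → ℝ) 1, ‖f x‖))
    rw [norm_mul]
    exact mul_le_mul_of_nonneg_right (norm_hpcCoeff_le hf k) (norm_nonneg _)
  have hweighted := summable_norm_and_hasSum_partition_smul hnonneg hsum hnorm
  rwa [(hasSum_hpcCoeff_mul_hpcCoeff hf hg hsummable).tsum_eq] at hweighted

/-- Given nonnegative families `(φ^{(i)}_j)_j` on `ℝ` with `Σ_j φ^{(i)}_j(k) = 1` for all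
`k ∈ ℕ₀`, for every `f ∈ L¹([0,1]^d)` and Schwartz `η` the double series
`Σ_j̄ Σ_k̄ φ_j̄(k̄) ⟨f, c_k̄⟩⟨c_k̄, η⟩` converges absolutely to `∫ f η`; that is,
`f = Σ_j̄ f^{hpc}_j̄` weak*-ly in `𝒮′(ℝ^d)`. -/
theorem statement7 (d : ℕ) (φ : Fin d → ℕ → ℝ → ℝ)
    (hnonneg : ∀ i j x, 0 ≤ φ i j x)
    (hsum : ∀ (i : Fin d) (k : ℕ), HasSum (fun j : ℕ => φ i j (k : ℝ)) 1)
    (f : (Fin d → ℝ) → ℂ) (hf : IntegrableOn f (Icc 0 1))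
    (η : SchwartzMap (Fin d → ℝ) ℂ) :
    Summable (fun jk : (Fin d → ℕ) × (Fin d → ℕ) =>
      ‖((∏ i, φ i (jk.1 i) ((jk.2 i : ℕ) : ℝ) : ℝ) : ℂ) *
        ((∫ x in Icc (0 : Fin d → ℝ) 1, f x * (hpc d jk.2 x : ℂ)) *
          (∫ x in Icc (0 : Fin d → ℝ) 1, (hpc d jk.2 x : ℂ) * η x))‖) ∧
    ∑' jk : (Fin d → ℕ) × (Fin d → ℕ),
        ((∏ i, φ i (jk.1 i) ((jk.2 i : ℕ) : ℝ) : ℝ) : ℂ) *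
          ((∫ x in Icc (0 : Fin d → ℝ) 1, f x * (hpc d jk.2 x : ℂ)) *
            (∫ x in Icc (0 : Fin d → ℝ) 1, (hpc d jk.2 x : ℂ) * η x)) =
      ∫ x in Icc (0 : Fin d → ℝ) 1, f x * η x := by
  have h := statement7_general (fun j k => Finset.prod_nonneg fun i _ => hnonneg i (j i) (k i))
    (fun k => hasSum_prod_pi_one (fun i => hsum i (k i))) hf
    η.integrable.integrableOn (summable_norm_hpcCoeff_schwartz η)
  simpa only [hpcCoeff, Complex.real_smul, mul_comm (f _)] using And.intro h.1 h.2.tsum_eq
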